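/- Let E belong to the class A(λ,n,m) and suppose m is not a perfect power, i.e., there are no natural numbers a and i with i ≥ 2 and m = a^i (for example m ∈ {2,3,5,6,7,10,11,12,13,14,15,17}). Then E is not Lipschitz equivalent to any dust-like self-similar set. -/

import Mathlib

open MeasureTheory Polynomial

/-- The class `𝒜(λ, n, m)` of self-similar subsets of `ℝ` with `m` exact overlaps,
generated by `n` similitudes `fᵢ x = λ x + bᵢ` of the same ratio `λ`. -/
def IsInClassA (lam : ℝ) (n m : ℕ) (E : Set ℝ) : Prop :=
  lam ∈ Set.Ioo (0 : ℝ) 1 ∧ 1 ≤ m ∧ m + 2 ≤ n ∧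
  ∃ b : ℕ → ℝ,
    b 0 = 0 ∧ b (n - 1) = 1 - lam ∧
    (∀ i, i + 1 < n → b i < b (i + 1)) ∧
    (∀ i, i + 1 < n →
      (Set.Icc (b i) (b i + lam) ∩ Set.Icc (b (i + 1)) (b (i + 1) + lam)).Nonempty →
        volume (Set.Icc (b i) (b i + lam) ∩ Set.Icc (b (i + 1)) (b (i + 1) + lam)) = 0 ∨
        volume (Set.Icc (b i) (b i + lam) ∩ Set.Icc (b (i + 1)) (b (i + 1) + lam)) =
          ENNReal.ofReal (lam * lam)) ∧
    {i : ℕ | i + 1 < n ∧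
      volume (Set.Icc (b i) (b i + lam) ∩ Set.Icc (b (i + 1)) (b (i + 1) + lam)) =
        ENNReal.ofReal (lam * lam)}.ncard = m ∧
    E.Nonempty ∧ IsCompact E ∧
    E = ⋃ i ∈ Finset.range n, (fun x => lam * x + b i) '' E

/-- A dust-like self-similar set in `ℝ^d`: the attractor of `t ≥ 2` contracting similitudes
whose images are pairwise disjoint (strong separation condition). -/
def IsDustLike {d : ℕ} (F : Set (EuclideanSpace ℝ (Fin d))) : Prop :=
  F.Nonempty ∧ IsCompact F ∧
  ∃ t : ℕ, 2 ≤ t ∧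
    ∃ (g : Fin t → EuclideanSpace ℝ (Fin d) → EuclideanSpace ℝ (Fin d)) (r : Fin t → ℝ),
      (∀ j, r j ∈ Set.Ioo (0 : ℝ) 1) ∧
      (∀ j x y, dist (g j x) (g j y) = r j * dist x y) ∧
      F = ⋃ j, g j '' F ∧
      (∀ j j', j ≠ j' → Disjoint (g j '' F) (g j' '' F))

/-- Lipschitz equivalence of two sets in (possibly different) metric spaces. -/
def LipEquiv {X Y : Type*} [MetricSpace X] [MetricSpace Y] (A : Set X) (B : Set Y) : Prop :=
  ∃ f : A → B, Function.Bijective f ∧ ∃ C : ℝ, 0 < C ∧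
    ∀ x y : A, C⁻¹ * dist x y ≤ dist (f x) (f y) ∧ dist (f x) (f y) ≤ C * dist x y

/-! Let `β > 1` be the larger root of `X² - nX + m`; the other root lies in `(0, 1)` because
`m + 2 ≤ n`. Each interval of a stage of the construction of `E` has `n` children with `m` overlaps
among them, and each overlap of two neighbours is a child of both. Hence, for a piece of `E` which
is isolated at scale `λ ^ j`, the quantity `(β * #intervals - #overlaps) / β ^ j` of stage `j` is
the same at all later stages. It is a finitely additive mass.

If `E` were Lipschitz equivalent to a dust-like set with ratios `rⱼ`, its cylinders would correspond
to isolated pieces of `E`, whose masses are of the form `τ / β ^ k` with `τ` in a finite subset of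
`ℤ[β]` and comparable to the products of the `pⱼ = rⱼ ^ s`, where `λ ^ s = β⁻¹`. Near the supremum
of the ratio of the mass to the product, the mass becomes exactly multiplicative, since ratios of
values `τ / β ^ k` are discrete. Hence `∑ pⱼ = 1`, some power of each `pⱼ` is a power of `β`, and
`pⱼ` is a ratio of elements of `ℤ[β]`. As the norm `m` of `β` is not a perfect power, each `pⱼ` is
itself a power `β⁻ˡʲ` with `lⱼ > 0`. Conjugating `∑ β⁻ˡʲ = 1` then gives a contradiction, because
the conjugate of every `β⁻ˡʲ` is greater than `1`.
-/

section WordMass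

open Filter Topology

variable {ι : Type*} {p : ι → ℝ} {mass : List ι → ℝ}

lemma prod_map_pos (hp : ∀ j, 0 < p j) (w : List ι) : 0 < (w.map p).prod :=
  List.prod_pos fun _ hx => by
    obtain ⟨j, -, rfl⟩ := List.mem_map.1 hx
    exact hp j

variable [Fintype ι]

lemma mass_le_mul_pow_sum_mul_prod (hmass : ∀ w, mass w = ∑ j, mass (j :: w)) {c : ℝ}
    (hle : ∀ w, mass w ≤ c * (w.map p).prod) (k : ℕ) (w : List ι) :
    mass w ≤ c * (∑ j, p j) ^ k * (w.map p).prod := by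
  induction k generalizing w with
  | zero => simpa using hle w
  | succ k ih =>
    calc mass w = ∑ j, mass (j :: w) := hmass w
      _ ≤ ∑ j, c * (∑ j, p j) ^ k * ((j :: w).map p).prod := Finset.sum_le_sum fun j _ => ih _
      _ = c * (∑ j, p j) ^ (k + 1) * (w.map p).prod := by
        simp only [List.map_cons, List.prod_cons]
        rw [← Finset.mul_sum, ← Finset.sum_mul]
        ring

lemma prod_mul_append_le_of_harmonic {h : List ι → ℝ} (hp : ∀ j, 0 ≤ p j) (h_nonneg : ∀ w, 0 ≤ h w)
    (h_harmonic : ∀ w, h w = ∑ j, p j * h (j :: w)) (v w : List ι) :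
    (v.map p).prod * h (v ++ w) ≤ h w := by
  induction v with
  | nil => simp
  | cons j v ih =>
    have hv : 0 ≤ (v.map p).prod := List.prod_nonneg fun _ hx => by
      obtain ⟨i, -, rfl⟩ := List.mem_map.1 hx
      exact hp i
    calc ((j :: v).map p).prod * h (j :: v ++ w)
        = (v.map p).prod * (p j * h (j :: (v ++ w))) := by
          simp only [List.map_cons, List.prod_cons, List.cons_append]; ring
      _ ≤ (v.map p).prod * h (v ++ w) := by
          gcongr
          rw [h_harmonic (v ++ w)]
          exact Finset.single_le_sum (f := fun i => p i * h (i :: (v ++ w)))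
            (fun i _ => mul_nonneg (hp i) (h_nonneg _)) (Finset.mem_univ j)
      _ ≤ h w := ih

-- The harmonic function `M - u` is nonnegative and tends to zero along `W i`, hence so does it at
-- every fixed extension of `W i`.
lemma tendsto_append_of_harmonic_of_le (hp : ∀ j, 0 < p j) (hp_sum : ∑ j, p j = 1)
    {u : List ι → ℝ} (hu : ∀ w, u w = ∑ j, p j * u (j :: w)) {M : ℝ} (hM : ∀ w, u w ≤ M)
    {α : Type*} {l : Filter α} {W : α → List ι} (hW : Tendsto (fun i => u (W i)) l (𝓝 M))
    (v : List ι) : Tendsto (fun i => u (v ++ W i)) l (𝓝 M) := by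
  have hv := prod_map_pos hp v
  have defect_eq (w : List ι) : M - u w = ∑ j, p j * (M - u (j :: w)) := by
    simp only [mul_sub, Finset.sum_sub_distrib, ← Finset.sum_mul, ← hu, hp_sum, one_mul]
  have defect_le (i : α) : M - u (v ++ W i) ≤ (M - u (W i)) / (v.map p).prod :=
    (le_div_iff₀' hv).2 <| prod_mul_append_le_of_harmonic (fun j => (hp j).le)
      (fun w => sub_nonneg.2 (hM w)) defect_eq v (W i)
  have lower : Tendsto (fun i => M - (M - u (W i)) / (v.map p).prod) l (𝓝 M) := by
    simpa using ((hW.const_sub M).div_const (v.map p).prod).const_sub M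
  exact tendsto_of_tendsto_of_tendsto_of_le_of_le lower tendsto_const_nhds
    (fun i => sub_le_comm.1 (defect_le i)) fun i => hM _

/-- A finite measure on the sequences over `ι`, given by its values on cylinders, which up to a
constant agree with those of the product measure with weights `p`. A word `j :: w` stands for
a subcylinder of the cylinder of `w`. -/
structure IsGibbsMass (p : ι → ℝ) (mass : List ι → ℝ) : Prop where
  pos : ∀ j, 0 < p j
  eq_sum : ∀ w, mass w = ∑ j, mass (j :: w)
  exists_le : ∃ c > 0, ∀ w, c * (w.map p).prod ≤ mass w
  exists_ge : ∃ c, ∀ w, mass w ≤ c * (w.map p).prod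

namespace IsGibbsMass

lemma mass_pos (h : IsGibbsMass p mass) (w : List ι) : 0 < mass w := by
  obtain ⟨c, hc, hge⟩ := h.exists_le
  exact (mul_pos hc (prod_map_pos h.pos w)).trans_le (hge w)

lemma sum_eq_one (h : IsGibbsMass p mass) : ∑ j, p j = 1 := by
  obtain ⟨c₁, hc₁, hge⟩ := h.exists_le
  obtain ⟨c₂, hle⟩ := h.exists_ge
  have upper (k : ℕ) : mass [] ≤ c₂ * (∑ j, p j) ^ k := by
    simpa using mass_le_mul_pow_sum_mul_prod h.eq_sum hle k []
  have lower (k : ℕ) : c₁ * (∑ j, p j) ^ k ≤ mass [] := by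
    have := mass_le_mul_pow_sum_mul_prod (mass := fun w => -mass w) (p := p) (c := -c₁)
      (fun w => by rw [h.eq_sum w, Finset.sum_neg_distrib]) (fun w => by linarith [hge w]) k []
    simp only [List.map_nil, List.prod_nil, mul_one] at this
    linarith
  apply le_antisymm <;> by_contra! hlt
  · obtain ⟨k, hk⟩ := (((tendsto_pow_atTop_atTop_of_one_lt hlt).const_mul_atTop hc₁).eventually
      (eventually_gt_atTop (mass []))).exists
    exact (lower k).not_gt hk
  · have hlim := ge_of_tendsto' ((tendsto_pow_atTop_nhds_zero_of_lt_one
      (Finset.sum_nonneg fun j _ => (h.pos j).le) hlt).const_mul c₂) upper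
    rw [mul_zero] at hlim
    exact hlim.not_gt (h.mass_pos [])

-- Take words `W i` along which the density `mass / ∏ p` approaches its supremum.
lemma exists_tendsto_mass_append_div (h : IsGibbsMass p mass) :
    ∃ W : ℕ → List ι, ∀ v : List ι,
      Tendsto (fun i => mass (v ++ W i) / mass (W i)) atTop (𝓝 (v.map p).prod) := by
  have prod_pos := prod_map_pos h.pos
  set density : List ι → ℝ := fun w => mass w / (w.map p).prod with hdensity
  have density_eq (w : List ι) : density w = ∑ j, p j * density (j :: w) := by
    simp only [hdensity, List.map_cons, List.prod_cons]
    rw [h.eq_sum w, Finset.sum_div]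
    refine Finset.sum_congr rfl fun j _ => ?_
    have := (h.pos j).ne'
    field_simp
  have hbdd : BddAbove (Set.range density) := by
    obtain ⟨c, hle⟩ := h.exists_ge
    refine ⟨c, ?_⟩
    rintro _ ⟨w, rfl⟩
    exact (div_le_iff₀ (prod_pos w)).2 (hle w)
  obtain ⟨u, -, hu, hu_mem⟩ := exists_seq_tendsto_sSup (Set.range_nonempty density) hbdd
  choose W hW using hu_mem
  set M := sSup (Set.range density)
  have density_le (w : List ι) : density w ≤ M := le_csSup hbdd ⟨w, rfl⟩
  have M_pos : 0 < M := (div_pos (h.mass_pos []) (prod_pos [])).trans_le (density_le [])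
  have tendsto_density (v : List ι) : Tendsto (fun i => density (v ++ W i)) atTop (𝓝 M) :=
    tendsto_append_of_harmonic_of_le h.pos h.sum_eq_one density_eq density_le (by simpa [hW]) v
  refine ⟨W, fun v => ?_⟩
  have hlim := ((tendsto_density v).div (tendsto_density []) M_pos.ne').mul_const (v.map p).prod
  rw [div_self M_pos.ne', one_mul] at hlim
  refine hlim.congr fun i => ?_
  have := (prod_pos (W i)).ne'
  have := (h.mass_pos (W i)).ne'
  have := (prod_pos v).ne'
  simp only [hdensity, Pi.div_apply, List.nil_append, List.map_append, List.prod_append]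
  field_simp

end IsGibbsMass

end WordMass

section GeometricValues

open Filter Topology

lemma finite_setOf_zpow_mul_mem_Icc {β c L U : ℝ} (hβ : 1 < β) (hc : 0 < c) (hL : 0 < L) :
    {z : ℤ | β ^ z * c ∈ Set.Icc L U}.Finite := by
  have hβ0 : 0 < β := one_pos.trans hβ
  have hlog : 0 < Real.log β := Real.log_pos hβ
  have log_eq (z : ℤ) : Real.log (β ^ z * c) = z * Real.log β + Real.log c := by
    rw [Real.log_mul (zpow_pos hβ0 z).ne' hc.ne', Real.log_zpow]
  refine (Set.finite_Icc ⌊(Real.log L - Real.log c) / Real.log β⌋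
    ⌈(Real.log U - Real.log c) / Real.log β⌉).subset fun z ⟨hzL, hzU⟩ => ⟨?_, ?_⟩
  · have h := log_eq z ▸ Real.log_le_log hL hzL
    exact Int.cast_le.1 ((Int.floor_le _).trans ((div_le_iff₀ hlog).2 (by linarith)))
  · have h := log_eq z ▸ Real.log_le_log (mul_pos (zpow_pos hβ0 z) hc) hzU
    exact Int.cast_le.1 (((le_div_iff₀ hlog).2 (by linarith)).trans (Int.le_ceil _))

lemma eventually_eq_of_tendsto_of_eq_zpow_mul {α : Type*} {l : Filter α} {β L : ℝ} (hβ : 1 < β)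
    {C : Set ℝ} (hC : C.Finite) (hC_pos : ∀ c ∈ C, 0 < c) {u : α → ℝ}
    (hu : ∀ i, ∃ z : ℤ, ∃ c ∈ C, u i = β ^ z * c) (hL : 0 < L) (hlim : Tendsto u l (𝓝 L)) :
    ∀ᶠ i in l, u i = L := by
  set V : Set ℝ := ⋃ c ∈ C, (fun z : ℤ => β ^ z * c) '' {z | β ^ z * c ∈ Set.Icc (L / 2) (2 * L)}
  have hV : V.Finite := hC.biUnion fun c hc =>
    (finite_setOf_zpow_mul_mem_Icc hβ (hC_pos c hc) (half_pos hL)).image _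
  have avoid : (V \ {L})ᶜ ∈ 𝓝 L := hV.sdiff.isClosed.isOpen_compl.mem_nhds (by simp)
  have near : Set.Icc (L / 2) (2 * L) ∈ 𝓝 L := Icc_mem_nhds (by linarith) (by linarith)
  filter_upwards [hlim avoid, hlim near] with i hi_avoid hi_near
  obtain ⟨z, c, hc, hi⟩ := hu i
  by_contra hne
  simp only [Set.mem_preimage, hi] at hi_near
  exact hi_avoid ⟨Set.mem_biUnion hc ⟨z, hi_near, hi.symm⟩, hne⟩

lemma exists_pow_eq_zpow_of_card_lt {β x c : ℝ} (hβ : β ≠ 0) (hx : x ≠ 0) (hc : c ≠ 0)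
    {T : Finset ℝ} {K : ℕ} (hK : T.card < K)
    (hvalue : ∀ k < K, ∃ e : ℕ, ∃ τ ∈ T, x ^ k * c = τ / β ^ e) :
    ∃ q : ℕ, 0 < q ∧ ∃ z : ℤ, x ^ q = β ^ z := by
  choose! e τ hτ heq using hvalue
  obtain ⟨a, ha, b, hb, hne, hab⟩ := Finset.exists_ne_map_eq_of_card_lt_of_maps_to
    (s := Finset.range K) (t := T) (f := τ) (by simpa) fun k hk => hτ k (by simpa using hk)
  rw [Finset.mem_range] at ha hb
  wlog hlt : a < b generalizing a b
  · exact this b hb a ha hne.symm hab.symm (by omega)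
  refine ⟨b - a, by omega, e a - e b, ?_⟩
  have hτ_eq : x ^ a * c * β ^ e a = x ^ b * c * β ^ e b := by
    rw [heq a ha, heq b hb, div_mul_cancel₀ _ (pow_ne_zero _ hβ),
      div_mul_cancel₀ _ (pow_ne_zero _ hβ), hab]
  rw [zpow_sub₀ hβ, zpow_natCast, zpow_natCast, eq_div_iff (pow_ne_zero _ hβ)]
  refine mul_left_cancel₀ (mul_ne_zero (pow_ne_zero a hx) hc) ?_
  rw [hτ_eq, ← Nat.add_sub_of_le hlt.le, Nat.add_sub_cancel_left, pow_add]
  ring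

variable {ι : Type*} [Fintype ι] {p : ι → ℝ} {mass : List ι → ℝ} {β : ℝ} {T : Set ℝ}

namespace IsGibbsMass

lemma exists_forall_mass_append_eq (h : IsGibbsMass p mass) (hβ : 1 < β) (hT : T.Finite)
    (hT_pos : ∀ τ ∈ T, 0 < τ) (hvalue : ∀ w, ∃ k : ℕ, ∃ τ ∈ T, mass w = τ / β ^ k)
    (V : Finset (List ι)) : ∃ w, ∀ v ∈ V, mass (v ++ w) = (v.map p).prod * mass w := by
  have hβ0 : 0 < β := one_pos.trans hβ
  obtain ⟨W, hW⟩ := h.exists_tendsto_mass_append_div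
  have ratio_eq (v : List ι) : ∀ᶠ i in atTop, mass (v ++ W i) / mass (W i) = (v.map p).prod := by
    refine eventually_eq_of_tendsto_of_eq_zpow_mul hβ (hT.image2 (· / ·) hT) ?_ (fun i => ?_)
      (prod_map_pos h.pos v) (hW v)
    · rintro _ ⟨τ, hτ, τ', hτ', rfl⟩
      exact div_pos (hT_pos τ hτ) (hT_pos τ' hτ')
    · obtain ⟨a, τ, hτ, ha⟩ := hvalue (v ++ W i)
      obtain ⟨b, τ', hτ', hb⟩ := hvalue (W i)
      refine ⟨b - a, _, ⟨τ, hτ, τ', hτ', rfl⟩, ?_⟩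
      simp only [zpow_sub₀ hβ0.ne', zpow_natCast, ha, hb]
      have := hT_pos τ' hτ'
      field_simp
  obtain ⟨i, hi⟩ := ((eventually_all_finset V).2 fun v _ => ratio_eq v).exists
  exact ⟨W i, fun v hv => (div_eq_iff (h.mass_pos _).ne').1 (hi v hv)⟩

lemma exists_mul_eq_and_pow_eq_zpow (h : IsGibbsMass p mass) (hβ : 1 < β) (hT : T.Finite)
    (hT_pos : ∀ τ ∈ T, 0 < τ) (hvalue : ∀ w, ∃ k : ℕ, ∃ τ ∈ T, mass w = τ / β ^ k) (j : ι) :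
    (∃ τ ∈ T, ∃ τ' ∈ T, ∃ a b : ℕ, p j * (τ * β ^ a) = τ' * β ^ b) ∧
      ∃ q : ℕ, 0 < q ∧ ∃ z : ℤ, p j ^ q = β ^ z := by
  classical
  have hβ0 : 0 < β := one_pos.trans hβ
  obtain ⟨w, hw⟩ := h.exists_forall_mass_append_eq hβ hT hT_pos hvalue
    ((Finset.range (hT.toFinset.card + 2)).image fun k => List.replicate k j)
  have hpow (k : ℕ) (hk : k < hT.toFinset.card + 2) :
      mass (List.replicate k j ++ w) = p j ^ k * mass w := by
    simpa using hw _ (Finset.mem_image_of_mem _ (Finset.mem_range.2 hk))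
  choose e τ hτ heq using hvalue
  constructor
  · refine ⟨τ w, hτ w, τ ([j] ++ w), hτ _, e ([j] ++ w), e w, ?_⟩
    have h_one := hpow 1 (by omega)
    rw [List.replicate_one, heq, heq w, pow_one] at h_one
    field_simp at h_one
    linarith
  · exact exists_pow_eq_zpow_of_card_lt hβ0.ne' (h.pos j).ne' (h.mass_pos w).ne'
      (T := hT.toFinset) (Nat.lt_add_of_pos_right two_pos)
      (fun k hk => ⟨_, _, hT.mem_toFinset.2 (hτ _), (hpow k hk).symm.trans (heq _)⟩)

end IsGibbsMass

end GeometricValues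

section QuadraticPisot

lemma dvd_of_pow_eq_pow_of_not_perfectPower {m : ℕ} (hm : ¬ ∃ a i : ℕ, 2 ≤ i ∧ m = a ^ i)
    {v q d : ℕ} (hq : 0 < q) (h : v ^ q = m ^ d) : q ∣ d := by
  obtain ⟨g, q', d', hg, hcop, rfl, rfl⟩ := Nat.exists_coprime' (Nat.gcd_pos_of_pos_left d hq)
  rw [pow_mul, pow_mul] at h
  obtain ⟨c, -, hc⟩ := Nat.exists_eq_pow_of_exponent_coprime_of_pow_eq_pow hcop
    (Nat.pow_left_injective hg.ne' h)
  have hq' : q' = 1 := by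
    have : ¬ 2 ≤ q' := fun h2 => hm ⟨c, q', h2, hc⟩
    have := Nat.pos_of_mul_pos_right hq
    omega
  exact Nat.mul_dvd_mul_right (hq' ▸ one_dvd _) g

/-- The ring `ℤ[ω]` with `ω² = nω - m`. -/
abbrev QuadraticOrder (n m : ℕ) : Type := QuadraticAlgebra ℤ (-m : ℤ) (n : ℤ)

namespace QuadraticOrder

open QuadraticAlgebra

variable {n m : ℕ} {γ : ℝ}

/-- Evaluation of `ℤ[ω]` at a real root `γ` of `X² - nX + m`. -/
noncomputable def evalAt (γ : ℝ) (hγ : γ * γ = n * γ - m) : QuadraticOrder n m →ₐ[ℤ] ℝ :=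
  lift ⟨γ, by simp only [zsmul_eq_mul, hγ]; push_cast; ring⟩

lemma evalAt_apply (hγ : γ * γ = n * γ - m) (z : QuadraticOrder n m) :
    evalAt γ hγ z = z.re + z.im * γ := by
  simp [evalAt, lift]

lemma evalAt_omega (hγ : γ * γ = n * γ - m) : evalAt γ hγ ω = γ := by
  simp [evalAt_apply]

lemma evalAt_injective (hγ : γ * γ = n * γ - m) (hirr : Irrational γ) :
    Function.Injective (evalAt γ hγ) := by
  refine (injective_iff_map_eq_zero _).2 fun z hz => ?_
  rw [evalAt_apply] at hz
  have him : z.im = 0 := by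
    by_contra hne
    exact ((hirr.intCast_mul hne).intCast_add z.re).ne_int 0 (by simpa using hz)
  ext
  · simpa [him] using hz
  · exact him

lemma norm_omega : norm (ω : QuadraticOrder n m) = m := by
  simp [norm_def]

end QuadraticOrder

/-- The monic polynomial `X² - nX + m` has the root `β > 1`, and its other root `n - β` lies in
`(0, 1)`: then `β` is a quadratic Pisot number. -/
structure IsQuadraticPisot (n m : ℕ) (β : ℝ) : Prop where
  mul_self_eq : β * β = n * β - m
  one_lt : 1 < β
  conj_pos : 0 < n - β
  conj_lt_one : n - β < 1

lemma exists_isQuadraticPisot {n m : ℕ} (hm : 1 ≤ m) (hnm : m + 2 ≤ n) :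
    ∃ β : ℝ, IsQuadraticPisot n m β := by
  have hm' : (1 : ℝ) ≤ m := by exact_mod_cast hm
  have hnm' : (m : ℝ) + 2 ≤ n := by exact_mod_cast hnm
  have hcont : ContinuousOn (fun γ : ℝ => n * γ - γ ^ 2) (Set.Icc 0 1) := by fun_prop
  obtain ⟨γ, ⟨hγ0, hγ1⟩, hγ⟩ := intermediate_value_Ioo (zero_le_one' ℝ) hcont
    (show (m : ℝ) ∈ _ from ⟨by norm_num; linarith, by norm_num; linarith⟩)
  simp only at hγ
  exact ⟨n - γ, by linear_combination -hγ, by linarith, by linarith, by linarith⟩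

namespace IsQuadraticPisot

open QuadraticOrder QuadraticAlgebra

variable {n m : ℕ} {β : ℝ}

lemma conj_mul_self_eq (hβ : IsQuadraticPisot n m β) : (n - β) * (n - β) = n * (n - β) - m := by
  linear_combination hβ.mul_self_eq

-- The conjugate `n - β` is integral over `ℤ` and lies strictly between two consecutive integers.
lemma irrational (hβ : IsQuadraticPisot n m β) : Irrational β := by
  rintro ⟨r, rfl⟩
  have hint : IsIntegral ℤ ((n : ℚ) - r) := by
    refine ⟨.X ^ 2 - .C (n : ℤ) * .X + .C (m : ℤ), by monicity!, ?_⟩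
    have h : ((n : ℚ) - r) * (n - r) = n * (n - r) - m := by exact_mod_cast hβ.conj_mul_self_eq
    simp only [Polynomial.eval₂_add, Polynomial.eval₂_sub, Polynomial.eval₂_mul,
      Polynomial.eval₂_pow, Polynomial.eval₂_X, Polynomial.eval₂_C]
    simp only [eq_intCast, Int.cast_natCast]
    linear_combination h
  obtain ⟨k, hk⟩ := IsIntegrallyClosed.isIntegral_iff.1 hint
  have hk' : (k : ℝ) = n - r := by exact_mod_cast congrArg (Rat.cast : ℚ → ℝ) hk
  have h0 : 0 < k := by exact_mod_cast hk'.trans_gt hβ.conj_pos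
  have h1 : k < 1 := by exact_mod_cast hk'.trans_lt hβ.conj_lt_one
  omega

-- Taking norms in `u ^ q = v ^ q * ω ^ d` makes `m ^ d` a `q`-th power.
lemma dvd_of_pow_mul_omega_pow_eq (hm : ¬ ∃ a i : ℕ, 2 ≤ i ∧ m = a ^ i) {q d : ℕ} (hq : 0 < q)
    {u v : QuadraticOrder n m} (hv : norm v ≠ 0) (h : v ^ q * ω ^ d = u ^ q) : q ∣ d := by
  have hnorm : (norm v).natAbs ^ q * m ^ d = (norm u).natAbs ^ q := by
    simpa [Int.natAbs_mul, Int.natAbs_pow, norm_omega] using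
      congrArg (fun z => (norm z).natAbs) h
  obtain ⟨c, hc⟩ := (Nat.pow_dvd_pow_iff hq.ne').1 (Dvd.intro _ hnorm)
  rw [hc, mul_pow] at hnorm
  exact dvd_of_pow_eq_pow_of_not_perfectPower hm hq (Nat.eq_of_mul_eq_mul_left
    (pow_pos (Int.natAbs_pos.2 hv) q) hnorm).symm

lemma norm_ne_zero (hβ : IsQuadraticPisot n m β) {v : QuadraticOrder n m} (hv : v ≠ 0) :
    norm v ≠ 0 := by
  have := (evalAt_injective hβ.mul_self_eq hβ.irrational).isDomain
    (evalAt β hβ.mul_self_eq).toRingHom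
  exact nonZeroDivisors.ne_zero
    (norm_mem_nonZeroDivisors_iff.2 (mem_nonZeroDivisors_of_ne_zero hv))

lemma exists_eq_inv_pow (hβ : IsQuadraticPisot n m β) (hm : ¬ ∃ a i : ℕ, 2 ≤ i ∧ m = a ^ i)
    {y : ℝ} (hy_pos : 0 < y) (hy_lt : y < 1) {u v : QuadraticOrder n m} (hu : u ≠ 0)
    (huv : y * evalAt β hβ.mul_self_eq u = evalAt β hβ.mul_self_eq v) {q : ℕ} (hq : 0 < q) {z : ℤ}
    (hz : y ^ q = β ^ z) : ∃ l : ℕ, 0 < l ∧ y = (β ^ l)⁻¹ := by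
  have hβ0 : 0 < β := one_pos.trans hβ.one_lt
  have inj := evalAt_injective hβ.mul_self_eq hβ.irrational
  have hv : v ≠ 0 := by
    rintro rfl
    rw [map_zero, mul_eq_zero, map_eq_zero_iff _ inj] at huv
    exact huv.elim hy_pos.ne' hu
  have hz_neg : z < 0 := by
    by_contra! hz_nonneg
    exact (pow_lt_one₀ hy_pos.le hy_lt hq.ne').not_ge
      (hz ▸ one_le_zpow₀ hβ.one_lt.le hz_nonneg)
  obtain ⟨d, rfl⟩ : ∃ d : ℕ, z = -d := ⟨z.natAbs, by omega⟩
  rw [zpow_neg, zpow_natCast] at hz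
  have h_order : v ^ q * ω ^ d = u ^ q := inj <| by
    rw [map_mul, map_pow, map_pow, map_pow, evalAt_omega, ← huv, mul_pow, hz]
    field_simp
  obtain ⟨l, rfl⟩ := dvd_of_pow_mul_omega_pow_eq hm hq (hβ.norm_ne_zero hv) h_order
  refine ⟨l, Nat.pos_of_ne_zero fun hl => ?_, ?_⟩
  · simp [hl] at hz_neg
  · rw [mul_comm, pow_mul, ← inv_pow] at hz
    exact (pow_left_inj₀ hy_pos.le (by positivity) hq.ne').1 hz

-- Conjugating a relation `∑ j, β⁻ˡʲ = 1` replaces every summand by a number larger than `1`.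
lemma sum_inv_pow_ne_one (hβ : IsQuadraticPisot n m β) {ι : Type*} [Fintype ι] {l : ι → ℕ}
    (hl : ∀ j, 0 < l j) : ∑ j, (β ^ l j)⁻¹ ≠ 1 := by
  intro h
  have sum_eq {γ : ℝ} (hγ : γ * γ = n * γ - m) (hγ0 : γ ≠ 0) :
      evalAt γ hγ (∑ j, ω ^ (∑ i, l i - l j)) =
        evalAt γ hγ (ω ^ ∑ i, l i) * ∑ j, (γ ^ l j)⁻¹ := by
    simp only [map_sum, map_pow, evalAt_omega, Finset.mul_sum]
    exact Finset.sum_congr rfl fun j _ => pow_sub₀ _ hγ0 <|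
      Finset.single_le_sum (fun _ _ => Nat.zero_le _) (Finset.mem_univ j)
  have hsum : ∑ j, ω ^ (∑ i, l i - l j) = (ω : QuadraticOrder n m) ^ ∑ i, l i :=
    evalAt_injective hβ.mul_self_eq hβ.irrational <| by
      rw [sum_eq _ (one_pos.trans hβ.one_lt).ne', h, mul_one]
  have h_conj : ∑ j, ((n - β) ^ l j)⁻¹ = 1 := by
    have := sum_eq hβ.conj_mul_self_eq hβ.conj_pos.ne'
    rw [hsum, map_pow, evalAt_omega] at this
    exact (mul_eq_left₀ (pow_pos hβ.conj_pos _).ne').1 this.symm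
  obtain ⟨j⟩ : Nonempty ι := by
    by_contra hι
    simp [not_nonempty_iff.1 hι] at h
  have h_large : 1 < ((n - β) ^ l j)⁻¹ :=
    (one_lt_inv₀ (pow_pos hβ.conj_pos _)).2 (pow_lt_one₀ hβ.conj_pos.le hβ.conj_lt_one (hl j).ne')
  have h_le := Finset.single_le_sum (f := fun j => ((n - β) ^ l j)⁻¹)
    (fun i _ => (inv_pos.2 (pow_pos hβ.conj_pos _)).le) (Finset.mem_univ j)
  linarith

lemma not_isGibbsMass (hβ : IsQuadraticPisot n m β) (hm : ¬ ∃ a i : ℕ, 2 ≤ i ∧ m = a ^ i)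
    {ι : Type*} [Fintype ι] {p : ι → ℝ} (hp : ∀ j, p j < 1) {mass : List ι → ℝ} {T : Set ℝ}
    (hT : T.Finite) (hT_pos : ∀ τ ∈ T, 0 < τ)
    (hT_order : T ⊆ Set.range (evalAt (n := n) (m := m) β hβ.mul_self_eq))
    (hvalue : ∀ w, ∃ k : ℕ, ∃ τ ∈ T, mass w = τ / β ^ k) : ¬ IsGibbsMass p mass := by
  intro h
  have hβ0 : 0 < β := one_pos.trans hβ.one_lt
  have exists_exponent (j : ι) : ∃ l : ℕ, 0 < l ∧ p j = (β ^ l)⁻¹ := by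
    obtain ⟨⟨τ, hτ, τ', hτ', a, b, hab⟩, q, hq, z, hz⟩ :=
      h.exists_mul_eq_and_pow_eq_zpow hβ.one_lt hT hT_pos hvalue j
    obtain ⟨u, rfl⟩ := hT_order hτ
    obtain ⟨v, rfl⟩ := hT_order hτ'
    refine hβ.exists_eq_inv_pow hm (h.pos j) (hp j) (u := u * ω ^ a) (v := v * ω ^ b) ?_ ?_ hq hz
    · intro hu
      refine (mul_pos (hT_pos _ hτ) (pow_pos hβ0 a)).ne' ?_
      simpa only [map_mul, map_pow, evalAt_omega, map_zero] using
        congrArg (evalAt β hβ.mul_self_eq) hu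
    · simpa only [map_mul, map_pow, evalAt_omega] using hab
  choose l hl hpl using exists_exponent
  refine hβ.sum_inv_pow_ne_one hl ?_
  simp only [← hpl, h.sum_eq_one]

end IsQuadraticPisot

end QuadraticPisot

section OverlapDigitSets

open scoped Pointwise

/-- Placing an interval of length `δ` at each point of `Q`, any two of these intervals either
overlap in an interval of length `δ * lam` or have disjoint interiors. -/
def OverlapSpaced (lam δ : ℝ) (Q : Finset ℝ) : Prop :=
  ∀ p ∈ Q, ∀ p' ∈ Q, p < p' → p' = p + δ * (1 - lam) ∨ p + δ ≤ p'

/-- The left endpoints of those intervals `[p, p + δ]`, `p ∈ Q`, which overlap the next one. -/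
noncomputable def overlaps (lam δ : ℝ) (Q : Finset ℝ) : Finset ℝ :=
  Q.filter fun p => p + δ * (1 - lam) ∈ Q

/-- `B` is the set of translation parts of similitudes `x ↦ lam * x + b` which define a
self-similar set with exact overlaps and convex hull `[0, 1]`. -/
structure IsOverlapDigitSet (lam : ℝ) (B : Finset ℝ) : Prop where
  lam_pos : 0 < lam
  lam_lt_one : lam < 1
  zero_mem : 0 ∈ B
  one_sub_mem : 1 - lam ∈ B
  subset_Icc : ∀ b ∈ B, b ∈ Set.Icc 0 (1 - lam)
  spaced : OverlapSpaced lam lam B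

variable {lam δ : ℝ} {Q B : Finset ℝ}

lemma mem_overlaps {p : ℝ} : p ∈ overlaps lam δ Q ↔ p ∈ Q ∧ p + δ * (1 - lam) ∈ Q :=
  Finset.mem_filter

lemma OverlapSpaced.mono {Q' : Finset ℝ} (hQ : OverlapSpaced lam δ Q) (h : Q' ⊆ Q) :
    OverlapSpaced lam δ Q' :=
  fun p hp p' hp' => hQ p (h hp) p' (h hp')

lemma mem_add_smul {q : ℝ} : q ∈ Q + δ • B ↔ ∃ p ∈ Q, ∃ b ∈ B, p + δ * b = q := by
  simp only [Finset.mem_add, Finset.mem_smul_finset, smul_eq_mul, exists_exists_and_eq_and]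

namespace IsOverlapDigitSet

lemma two_mul_lam_le_one (hB : IsOverlapDigitSet lam B) : 2 * lam ≤ 1 := by
  have hpos := sub_pos.2 hB.lam_lt_one
  rcases hB.spaced 0 hB.zero_mem _ hB.one_sub_mem hpos with h | h
  · nlinarith
  · linarith

lemma eq_of_add_mul_eq (hB : IsOverlapDigitSet lam B) (hδ : 0 < δ) (hQ : OverlapSpaced lam δ Q)
    {p p' b b' : ℝ} (hp : p ∈ Q) (hp' : p' ∈ Q) (hb : b ∈ B) (hb' : b' ∈ B) (hlt : p < p')
    (heq : p + δ * b = p' + δ * b') : p' = p + δ * (1 - lam) ∧ b = 1 - lam ∧ b' = 0 := by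
  obtain ⟨-, hb_le⟩ := hB.subset_Icc b hb
  obtain ⟨hb'_nonneg, -⟩ := hB.subset_Icc b' hb'
  have hgap := mul_pos hδ hB.lam_pos
  have hδb := mul_le_mul_of_nonneg_left hb_le hδ.le
  have hδb' := mul_nonneg hδ.le hb'_nonneg
  rcases hQ p hp p' hp' hlt with h | h
  · refine ⟨h, hb_le.antisymm (le_of_mul_le_mul_left ?_ hδ), hb'_nonneg.antisymm' ?_⟩
    · linarith
    · exact le_of_mul_le_mul_left (by linarith) hδ
  · linarith

lemma card_add_smul (hB : IsOverlapDigitSet lam B) (hδ : 0 < δ) (hQ : OverlapSpaced lam δ Q)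
    {S : Finset ℝ} (hS : S ⊆ B) (hS' : 0 ∉ S ∨ 1 - lam ∉ S) :
    (Q + δ • S).card = Q.card * S.card := by
  rw [← Finset.card_smul_finset (Units.mk0 δ hδ.ne') S, Units.smul_mk0, Finset.card_add_iff]
  have no_coincidence {p p' s s' : ℝ} (hp : p ∈ Q) (hp' : p' ∈ Q) (hs : s ∈ S) (hs' : s' ∈ S)
      (heq : p + δ * s = p' + δ * s') : ¬ p < p' := fun hlt => by
    obtain ⟨-, rfl, rfl⟩ := hB.eq_of_add_mul_eq hδ hQ hp hp' (hS hs) (hS hs') hlt heq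
    exact hS'.elim (· hs') (· hs)
  rintro ⟨p, x⟩ hpx ⟨p', x'⟩ hpx' heq
  simp only [Set.mem_prod, Finset.mem_coe, Finset.mem_smul_finset, smul_eq_mul] at hpx hpx' heq
  obtain ⟨hp, s, hs, rfl⟩ := hpx
  obtain ⟨hp', s', hs', rfl⟩ := hpx'
  have hpp' : p = p' := le_antisymm (not_lt.1 (no_coincidence hp' hp hs' hs heq.symm))
    (not_lt.1 (no_coincidence hp hp' hs hs' heq))
  subst hpp'
  simpa using heq

lemma card_add_smul_add_card_overlaps (hB : IsOverlapDigitSet lam B) (hδ : 0 < δ)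
    (hQ : OverlapSpaced lam δ Q) :
    (Q + δ • B).card + (overlaps lam δ Q).card = Q.card * B.card := by
  have h_union : Q + δ • B = Q ∪ (Q + δ • B.erase 0) := by
    conv_lhs => rw [← Finset.insert_erase hB.zero_mem, Finset.insert_eq,
      Finset.smul_finset_union, Finset.smul_finset_singleton, smul_zero, Finset.add_union,
      Finset.singleton_zero, add_zero]
  have h_inter : Q ∩ (Q + δ • B.erase 0) = (overlaps lam δ Q).image (· + δ * (1 - lam)) := by
    ext q
    simp only [Finset.mem_inter, mem_add_smul, Finset.mem_erase, Finset.mem_image, mem_overlaps]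
    constructor
    · rintro ⟨hq, p, hp, b, ⟨hb_ne, hb⟩, rfl⟩
      have hb_pos := mul_pos hδ ((hB.subset_Icc b hb).1.lt_of_ne' hb_ne)
      obtain ⟨h, -, -⟩ := hB.eq_of_add_mul_eq hδ hQ hp hq hb hB.zero_mem (by linarith) (by ring)
      exact ⟨p, ⟨hp, h ▸ hq⟩, h.symm⟩
    · rintro ⟨p, ⟨hp, hq⟩, rfl⟩
      exact ⟨hq, p, hp, 1 - lam, ⟨(sub_pos.2 hB.lam_lt_one).ne', hB.one_sub_mem⟩, rfl⟩
  have h := Finset.card_union_add_card_inter Q (Q + δ • B.erase 0)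
  rw [← h_union, h_inter, Finset.card_image_of_injective _ (add_left_injective _),
    hB.card_add_smul hδ hQ (Finset.erase_subset _ _) (.inl (Finset.notMem_erase _ _)),
    ← mul_one_add, add_comm 1, Finset.card_erase_add_one hB.zero_mem] at h
  exact h

lemma exists_common_cell (hB : IsOverlapDigitSet lam B) (hδ : 0 < δ) (hQ : OverlapSpaced lam δ Q)
    {q q' : ℝ} (hq : q ∈ Q + δ • B) (hq' : q' ∈ Q + δ • B) (hlt : q < q')
    (hgap : q' < q + δ * lam) : ∃ p ∈ Q, ∃ b ∈ B, ∃ b' ∈ B, p + δ * b = q ∧ p + δ * b' = q' := by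
  obtain ⟨p, hp, b, hb, rfl⟩ := mem_add_smul.1 hq
  obtain ⟨p', hp', b', hb', rfl⟩ := mem_add_smul.1 hq'
  obtain ⟨hb_nonneg, hb_le⟩ := hB.subset_Icc b hb
  obtain ⟨hb'_nonneg, hb'_le⟩ := hB.subset_Icc b' hb'
  have hlam := hB.lam_pos
  rcases lt_trichotomy p p' with h | rfl | h
  · rcases hQ p hp p' hp' h with rfl | hfar
    · rcases hb_le.eq_or_lt with rfl | hb_lt
      · exact ⟨_, hp', 0, hB.zero_mem, b', hb', by ring, rfl⟩
      rcases hb'_nonneg.eq_or_lt with rfl | hb'_pos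
      · exact ⟨p, hp, b, hb, 1 - lam, hB.one_sub_mem, rfl, by ring⟩
      have hsmall : 1 - lam + b' - b < lam := by nlinarith
      rcases hB.spaced b hb _ hB.one_sub_mem hb_lt with h₁ | h₁ <;>
        rcases hB.spaced 0 hB.zero_mem b' hb' hb'_pos with h₂ | h₂ <;>
        nlinarith [hB.two_mul_lam_le_one]
    · nlinarith
  · exact ⟨p, hp, b, hb, b', hb', rfl, rfl⟩
  · rcases hQ p' hp' p hp h with rfl | hfar <;> nlinarith

lemma spaced_add_smul (hB : IsOverlapDigitSet lam B) (hδ : 0 < δ) (hQ : OverlapSpaced lam δ Q) :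
    OverlapSpaced lam (δ * lam) (Q + δ • B) := by
  intro q hq q' hq' hlt
  by_contra! h
  obtain ⟨p, -, b, hb, b', hb', rfl, rfl⟩ := hB.exists_common_cell hδ hQ hq hq' hlt h.2
  have hbb' : b < b' := lt_of_mul_lt_mul_left (by linarith) hδ.le
  rcases hB.spaced b hb b' hb' hbb' with rfl | hfar
  · exact h.1 (by ring)
  · nlinarith [h.2]

lemma overlaps_add_smul (hB : IsOverlapDigitSet lam B) (hδ : 0 < δ) (hQ : OverlapSpaced lam δ Q) :
    overlaps lam (δ * lam) (Q + δ • B) = Q + δ • overlaps lam lam B := by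
  have hδlam := mul_pos hδ hB.lam_pos
  ext q
  rw [mem_overlaps]
  constructor
  · rintro ⟨hq, hq'⟩
    have hlt := mul_pos hδlam (sub_pos.2 hB.lam_lt_one)
    obtain ⟨p, hp, b, hb, b', hb', rfl, h⟩ := hB.exists_common_cell hδ hQ hq hq' (by linarith)
      (by nlinarith [mul_pos hδlam hB.lam_pos])
    have hbb' : b' = b + lam * (1 - lam) := mul_left_cancel₀ hδ.ne' (by linear_combination h)
    exact mem_add_smul.2 ⟨p, hp, b, mem_overlaps.2 ⟨hb, hbb' ▸ hb'⟩, rfl⟩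
  · intro hq
    obtain ⟨p, hp, b, hb, rfl⟩ := mem_add_smul.1 hq
    rw [mem_overlaps] at hb
    exact ⟨mem_add_smul.2 ⟨p, hp, b, hb.1, rfl⟩, mem_add_smul.2 ⟨p, hp, _, hb.2, by ring⟩⟩

lemma card_add_smul_overlaps (hB : IsOverlapDigitSet lam B) (hδ : 0 < δ)
    (hQ : OverlapSpaced lam δ Q) :
    (Q + δ • overlaps lam lam B).card = Q.card * (overlaps lam lam B).card := by
  refine hB.card_add_smul hδ hQ (Finset.filter_subset _ _) (.inr fun h => ?_)
  have := (hB.subset_Icc _ (mem_overlaps.1 h).2).2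
  nlinarith [hB.lam_pos, hB.lam_lt_one]

end IsOverlapDigitSet

/-- `E` is the attractor of the similitudes `x ↦ lam * x + b`, `b ∈ B`, with exact overlaps. -/
structure IsOverlapAttractor (lam : ℝ) (B : Finset ℝ) (E : Set ℝ) : Prop
    extends IsOverlapDigitSet lam B where
  nonempty : E.Nonempty
  isCompact : IsCompact E
  eq_iUnion : E = ⋃ b ∈ B, (fun x => lam * x + b) '' E

/-- The left endpoints of the intervals of length `lam ^ j` in the `j`-th stage of the construction
of the self-similar set with digits `B`. -/
noncomputable def vertices (lam : ℝ) (B : Finset ℝ) : ℕ → Finset ℝ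
  | 0 => {0}
  | j + 1 => vertices lam B j + lam ^ j • B

/-- The subset `A` of `E` has distance greater than `r` from the rest of `E`. -/
def IsIsolatedAt {X : Type*} [PseudoMetricSpace X] (E : Set X) (r : ℝ) (A : Set X) : Prop :=
  ∀ a ∈ A, ∀ e ∈ E, dist a e ≤ r → e ∈ A

open scoped Classical in
/-- The mass which the natural measure of the self-similar set gives to an isolated part `A`, up to
a constant: at stage `j`, an interval counts `β` and an overlap counts `-1`, scaled by `β⁻ʲ`. -/
noncomputable def weight (lam β : ℝ) (B : Finset ℝ) (j : ℕ) (A : Set ℝ) : ℝ :=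
  (β * ((vertices lam B j).filter (· ∈ A)).card -
    ((overlaps lam (lam ^ j) (vertices lam B j)).filter (· ∈ A)).card) / β ^ j

lemma IsIsolatedAt.mono {X : Type*} [PseudoMetricSpace X] {E A : Set X} {r r' : ℝ}
    (hA : IsIsolatedAt E r A) (hr : r' ≤ r) : IsIsolatedAt E r' A :=
  fun a ha e he h => hA a ha e he (h.trans hr)

open scoped Classical in
lemma card_filter_mem_iUnion {α ι : Type*} [Fintype ι] (Q : Finset α) {A : ι → Set α}
    (hA : Pairwise (Function.onFun Disjoint A)) :
    (Q.filter (· ∈ ⋃ i, A i)).card = ∑ i, (Q.filter (· ∈ A i)).card := by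
  rw [← Finset.card_biUnion (t := fun i => Q.filter (· ∈ A i)) fun i _ j _ hij =>
    Finset.disjoint_filter.2 fun _ _ hx => Set.disjoint_left.1 (hA hij) hx]
  congr 1
  ext x
  simp

lemma weight_iUnion {lam β : ℝ} {B : Finset ℝ} {ι : Type*} [Fintype ι] {A : ι → Set ℝ}
    (hA : Pairwise (Function.onFun Disjoint A)) (j : ℕ) :
    weight lam β B j (⋃ i, A i) = ∑ i, weight lam β B j (A i) := by
  simp only [weight, card_filter_mem_iUnion _ hA, ← Finset.sum_div, Finset.sum_sub_distrib,
    ← Finset.mul_sum, Nat.cast_sum]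

open scoped Classical in
lemma IsIsolatedAt.filter_add_smul {δ : ℝ} {Q S : Finset ℝ} {E A : Set ℝ} (hδ : 0 ≤ δ)
    (hA : IsIsolatedAt E δ A) (hQ : ↑Q ⊆ E) (hS : ∀ s ∈ S, s ∈ Set.Icc 0 1)
    (hQS : ↑(Q + δ • S) ⊆ E) :
    (Q + δ • S).filter (· ∈ A) = Q.filter (· ∈ A) + δ • S := by
  have mem_iff {p s : ℝ} (hp : p ∈ Q) (hs : s ∈ S) : p + δ * s ∈ A ↔ p ∈ A := by
    have hdist : dist (p + δ * s) p ≤ δ := by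
      rw [Real.dist_eq, add_sub_cancel_left, abs_of_nonneg (mul_nonneg hδ (hS s hs).1)]
      exact mul_le_of_le_one_right hδ (hS s hs).2
    exact ⟨fun h => hA _ h _ (hQ hp) hdist,
      fun h => hA _ h _ (hQS (mem_add_smul.2 ⟨p, hp, s, hs, rfl⟩)) (dist_comm p _ ▸ hdist)⟩
  ext q
  simp only [Finset.mem_filter, mem_add_smul]
  constructor
  · rintro ⟨⟨p, hp, s, hs, rfl⟩, hq⟩
    exact ⟨p, ⟨hp, (mem_iff hp hs).1 hq⟩, s, hs, rfl⟩
  · rintro ⟨p, ⟨hp, hpA⟩, s, hs, rfl⟩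
    exact ⟨⟨p, hp, s, hs, rfl⟩, (mem_iff hp hs).2 hpA⟩

open scoped Classical in
lemma IsIsolatedAt.overlaps_filter {Q : Finset ℝ} {E A : Set ℝ} (hlam : 0 ≤ lam)
    (hlam' : lam ≤ 1) (hδ : 0 ≤ δ) (hA : IsIsolatedAt E δ A) (hQ : ↑Q ⊆ E) :
    overlaps lam δ (Q.filter (· ∈ A)) = (overlaps lam δ Q).filter (· ∈ A) := by
  ext p
  simp only [mem_overlaps, Finset.mem_filter]
  refine ⟨fun ⟨hp, hp'⟩ => ⟨⟨hp.1, hp'.1⟩, hp.2⟩, fun ⟨⟨hp, hp'⟩, hpA⟩ =>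
    ⟨⟨hp, hpA⟩, hp', hA p hpA _ (hQ hp') ?_⟩⟩
  rw [dist_comm, Real.dist_eq, add_sub_cancel_left,
    abs_of_nonneg (mul_nonneg hδ (sub_nonneg.2 hlam'))]
  exact mul_le_of_le_one_right hδ (by linarith)

lemma card_le_floor_add_one {Q : Finset ℝ} {σ L : ℝ} (hσ : 0 < σ)
    (hsep : ∀ p ∈ Q, ∀ p' ∈ Q, p < p' → p + σ ≤ p')
    (hdiam : ∀ p ∈ Q, ∀ p' ∈ Q, dist p p' ≤ L * σ) : Q.card ≤ ⌊L⌋₊ + 1 := by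
  rcases Q.eq_empty_or_nonempty with rfl | hQ
  · simp
  set a := Q.min' hQ
  have ha : a ∈ Q := Q.min'_mem hQ
  have offset_nonneg {p : ℝ} (hp : p ∈ Q) : 0 ≤ (p - a) / σ :=
    div_nonneg (sub_nonneg.2 (Q.min'_le p hp)) hσ.le
  rw [← Finset.card_range (⌊L⌋₊ + 1)]
  refine Finset.card_le_card_of_injOn (fun p => ⌊(p - a) / σ⌋₊) (fun p hp => ?_)
    (StrictMonoOn.injOn fun p hp p' hp' hlt => ?_)
  · have h := (le_abs_self _).trans (hdiam p hp a ha)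
    simpa [Nat.lt_succ_iff] using Nat.floor_mono ((div_le_iff₀ hσ).2 h)
  · refine Nat.lt_of_add_one_le ((Nat.floor_add_one (offset_nonneg hp)).symm.trans_le
      (Nat.floor_mono ?_))
    rw [div_add_one hσ.ne']
    exact div_le_div_of_nonneg_right (by linarith [hsep p hp p' hp' hlt]) hσ.le

namespace IsOverlapDigitSet

lemma spaced_vertices (hB : IsOverlapDigitSet lam B) (j : ℕ) :
    OverlapSpaced lam (lam ^ j) (vertices lam B j) := by
  induction j with
  | zero => simp [OverlapSpaced, vertices]
  | succ j ih => exact hB.spaced_add_smul (pow_pos hB.lam_pos j) ih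

lemma add_le_of_mem_vertices (hB : IsOverlapDigitSet lam B) {j : ℕ} {p p' : ℝ}
    (hp : p ∈ vertices lam B j) (hp' : p' ∈ vertices lam B j) (hlt : p < p') :
    p + lam ^ j / 2 ≤ p' := by
  have hpos := pow_pos hB.lam_pos j
  rcases hB.spaced_vertices j p hp p' hp' hlt with h | h
  · nlinarith [hB.two_mul_lam_le_one]
  · linarith

end IsOverlapDigitSet

namespace IsOverlapAttractor

variable {E A : Set ℝ} {β : ℝ}

lemma mem_iff_exists_digit (hE : IsOverlapAttractor lam B E) {e : ℝ} :
    e ∈ E ↔ ∃ b ∈ B, ∃ e' ∈ E, lam * e' + b = e := by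
  conv_lhs => rw [hE.eq_iUnion]
  simp

lemma subset_Icc_zero_one (hE : IsOverlapAttractor lam B E) : E ⊆ Set.Icc 0 1 := by
  have hlam := sub_pos.2 hE.lam_lt_one
  obtain ⟨x, hx, hx_le⟩ := hE.isCompact.exists_isLeast hE.nonempty
  obtain ⟨y, hy, hy_ge⟩ := hE.isCompact.exists_isGreatest hE.nonempty
  obtain ⟨b, hb, x', hx', rfl⟩ := hE.mem_iff_exists_digit.1 hx
  obtain ⟨c, hc, y', hy', rfl⟩ := hE.mem_iff_exists_digit.1 hy
  have hx_min := mul_le_mul_of_nonneg_left (hx_le hx') hE.lam_pos.le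
  have hy_max := mul_le_mul_of_nonneg_left (hy_ge hy') hE.lam_pos.le
  have := (hE.subset_Icc b hb).1
  have := (hE.subset_Icc c hc).2
  exact fun e he => ⟨(hx_le he).trans' (by nlinarith), (hy_ge he).trans (by nlinarith)⟩

lemma zero_mem_attractor (hE : IsOverlapAttractor lam B E) : 0 ∈ E := by
  obtain ⟨x, hx, hx_le⟩ := hE.isCompact.exists_isLeast hE.nonempty
  have h := hx_le (hE.mem_iff_exists_digit.2 ⟨0, hE.zero_mem, x, hx, rfl⟩)
  have hx_nonneg := (hE.subset_Icc_zero_one hx).1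
  have hx_zero : x = 0 := by nlinarith [hE.lam_lt_one]
  exact hx_zero ▸ hx

lemma mem_iff_exists_vertex (hE : IsOverlapAttractor lam B E) (j : ℕ) {e : ℝ} :
    e ∈ E ↔ ∃ p ∈ vertices lam B j, ∃ e' ∈ E, p + lam ^ j * e' = e := by
  induction j generalizing e with
  | zero => simp [vertices]
  | succ j ih =>
    constructor
    · intro he
      obtain ⟨p, hp, e', he', rfl⟩ := ih.1 he
      obtain ⟨b, hb, e'', he'', rfl⟩ := hE.mem_iff_exists_digit.1 he'
      exact ⟨_, mem_add_smul.2 ⟨p, hp, b, hb, rfl⟩, e'', he'', by ring⟩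
    · rintro ⟨_, hq, e', he', rfl⟩
      obtain ⟨p, hp, b, hb, rfl⟩ := mem_add_smul.1 hq
      exact ih.2 ⟨p, hp, _, hE.mem_iff_exists_digit.2 ⟨b, hb, e', he', rfl⟩, by ring⟩

lemma vertices_subset (hE : IsOverlapAttractor lam B E) (j : ℕ) : ↑(vertices lam B j) ⊆ E :=
  fun p hp => (hE.mem_iff_exists_vertex j).2 ⟨p, hp, 0, hE.zero_mem_attractor, by ring⟩

open scoped Classical in
lemma weight_succ (hE : IsOverlapAttractor lam B E)
    (hβ : IsQuadraticPisot B.card (overlaps lam lam B).card β) {j : ℕ}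
    (hA : IsIsolatedAt E (lam ^ j) A) : weight lam β B (j + 1) A = weight lam β B j A := by
  have hβ0 := one_pos.trans hβ.one_lt
  have hδ := pow_pos hE.lam_pos j
  have hP := hE.spaced_vertices j
  have hPE := hE.vertices_subset j
  have hPE' := hE.vertices_subset (j + 1)
  rw [vertices] at hPE'
  have digit_mem (b : ℝ) (hb : b ∈ B) : b ∈ Set.Icc 0 1 :=
    Set.Icc_subset_Icc_right (by linarith [hE.lam_pos]) (hE.subset_Icc b hb)
  have h_vertices := hA.filter_add_smul hδ.le hPE digit_mem hPE'
  have h_overlaps := hA.filter_add_smul (S := overlaps lam lam B) hδ.le hPE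
    (fun b hb => digit_mem b (Finset.filter_subset _ _ hb)) <|
      (Finset.coe_subset.2 <| Finset.add_subset_add_left <|
        Finset.smul_finset_subset_smul_finset <| Finset.filter_subset _ _).trans hPE'
  have hPA := hP.mono (Finset.filter_subset (· ∈ A) _)
  have h_card := hE.card_add_smul_add_card_overlaps hδ hPA
  rw [hA.overlaps_filter hE.lam_pos.le hE.lam_lt_one.le hδ.le hPE, ← @Nat.cast_inj ℝ] at h_card
  push_cast at h_card
  rw [weight, weight, vertices, pow_succ, hE.overlaps_add_smul hδ hP, h_vertices, h_overlaps,
    hE.card_add_smul_overlaps hδ hPA, div_eq_div_iff (by positivity) (by positivity)]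
  push_cast
  linear_combination β ^ j * β * h_card -
    β ^ j * ((vertices lam B j).filter (· ∈ A)).card * hβ.mul_self_eq

lemma weight_eq_of_le (hE : IsOverlapAttractor lam B E)
    (hβ : IsQuadraticPisot B.card (overlaps lam lam B).card β) {j k : ℕ}
    (hA : IsIsolatedAt E (lam ^ j) A) (hjk : j ≤ k) : weight lam β B k A = weight lam β B j A := by
  induction k, hjk using Nat.le_induction with
  | base => rfl
  | succ k hjk ih =>
    rw [← ih, hE.weight_succ hβ (hA.mono (pow_le_pow_of_le_one hE.lam_pos.le hE.lam_lt_one.le hjk))]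

lemma exists_weight_eq (hE : IsOverlapAttractor lam B E) {L : ℝ} {j : ℕ} (hA_sub : A ⊆ E)
    (hA_ne : A.Nonempty) (hA : IsIsolatedAt E (lam ^ j) A)
    (hA_diam : ∀ a ∈ A, ∀ a' ∈ A, dist a a' ≤ L * lam ^ j) :
    ∃ N M : ℕ, 1 ≤ N ∧ N ≤ ⌊2 * L⌋₊ + 1 ∧ M ≤ N ∧ weight lam β B j A = (β * N - M) / β ^ j := by
  classical
  have hδ := pow_pos hE.lam_pos j
  refine ⟨_, _, Finset.card_pos.2 ?_, card_le_floor_add_one (half_pos hδ) ?_ ?_,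
    Finset.card_le_card (Finset.filter_subset_filter _ (Finset.filter_subset _ _)), rfl⟩
  · obtain ⟨a, ha⟩ := hA_ne
    obtain ⟨p, hp, e, he, rfl⟩ := (hE.mem_iff_exists_vertex j).1 (hA_sub ha)
    obtain ⟨he_nonneg, he_le⟩ := hE.subset_Icc_zero_one he
    refine ⟨p, Finset.mem_filter.2 ⟨hp, hA _ ha _ (hE.vertices_subset j hp) ?_⟩⟩
    rw [Real.dist_eq, add_sub_cancel_left, abs_of_nonneg (by positivity)]
    exact mul_le_of_le_one_right hδ.le he_le
  · simp only [Finset.mem_filter]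
    exact fun p hp p' hp' => hE.add_le_of_mem_vertices hp.1 hp'.1
  · simp only [Finset.mem_filter]
    exact fun p hp p' hp' => (hA_diam p hp.2 p' hp'.2).trans_eq (by ring)

end IsOverlapAttractor

section DigitSequences

variable {b : ℕ → ℝ} {n : ℕ}

lemma strictMonoOn_of_gaps (hlam : lam ∈ Set.Ioo 0 1)
    (hgap : ∀ i, i + 1 < n → b (i + 1) = b i + lam * (1 - lam) ∨ b i + lam ≤ b (i + 1)) :
    StrictMonoOn b (Set.Iio n) := by
  refine strictMonoOn_of_lt_add_one Set.ordConnected_Iio fun i _ _ hi => ?_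
  have := mul_pos hlam.1 (sub_pos.2 hlam.2)
  rcases hgap i hi with h | h <;> linarith [hlam.1]

lemma add_two_mul_le_of_gaps (hlam : lam ∈ Set.Ioo 0 1)
    (hgap : ∀ i, i + 1 < n → b (i + 1) = b i + lam * (1 - lam) ∨ b i + lam ≤ b (i + 1)) {i j : ℕ}
    (hij : i + 1 < j) (hj : j < n) : b i + 2 * (lam * (1 - lam)) ≤ b j := by
  have add_le {i : ℕ} (hi : i + 1 < n) : b i + lam * (1 - lam) ≤ b (i + 1) := by
    rcases hgap i hi with h | h <;> nlinarith [hlam.1, hlam.2]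
  have := (strictMonoOn_of_gaps hlam hgap).monotoneOn (a := i + 2) (b := j)
    (Set.mem_Iio.2 (by omega)) hj (by omega)
  linarith [add_le (i := i) (by omega), add_le (i := i + 1) (by omega)]

lemma two_mul_le_one_of_gaps (hlam : lam ∈ Set.Ioo 0 1) (hn : 0 < n) (hb_zero : b 0 = 0)
    (hb_last : b (n - 1) = 1 - lam)
    (hgap : ∀ i, i + 1 < n → b (i + 1) = b i + lam * (1 - lam) ∨ b i + lam ≤ b (i + 1))
    (hcount : {i | i + 1 < n ∧ b (i + 1) = b i + lam * (1 - lam)}.ncard ≠ n - 1) :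
    2 * lam ≤ 1 := by
  have hmono := (strictMonoOn_of_gaps hlam hgap).monotoneOn
  obtain ⟨i, hi, hi_gap⟩ : ∃ i, i + 1 < n ∧ b i + lam ≤ b (i + 1) := by
    by_contra! h
    refine hcount (Eq.trans (congrArg Set.ncard (Set.ext fun i => ?_)) (Set.ncard_Iio_nat (n - 1)))
    refine ⟨fun hi => Nat.lt_sub_of_add_lt hi.1, fun hi => ?_⟩
    have hi' := Nat.add_lt_of_lt_sub hi
    exact ⟨hi', (hgap i hi').resolve_right (h i hi').not_ge⟩
  have h_zero := hmono (a := 0) (b := i) (Set.mem_Iio.2 hn) (Set.mem_Iio.2 (by omega)) i.zero_le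
  have h_last := hmono (a := i + 1) (b := n - 1) hi (Set.mem_Iio.2 (by omega)) (by omega)
  linarith

lemma isOverlapDigitSet_image (hlam : lam ∈ Set.Ioo 0 1) (hlam' : 2 * lam ≤ 1) (hn : 0 < n)
    (hb_zero : b 0 = 0) (hb_last : b (n - 1) = 1 - lam)
    (hgap : ∀ i, i + 1 < n → b (i + 1) = b i + lam * (1 - lam) ∨ b i + lam ≤ b (i + 1)) :
    IsOverlapDigitSet lam ((Finset.range n).image b) where
  lam_pos := hlam.1
  lam_lt_one := hlam.2
  zero_mem := Finset.mem_image.2 ⟨0, Finset.mem_range.2 hn, hb_zero⟩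
  one_sub_mem := Finset.mem_image.2 ⟨n - 1, Finset.mem_range.2 (by omega), hb_last⟩
  subset_Icc := by
    have hmono := (strictMonoOn_of_gaps hlam hgap).monotoneOn
    simp only [Finset.forall_mem_image, Finset.mem_range]
    exact fun i hi => ⟨hb_zero ▸ hmono (Set.mem_Iio.2 hn) hi (Nat.zero_le i),
      hb_last ▸ hmono hi (Set.mem_Iio.2 (by omega)) (by omega)⟩
  spaced := by
    simp only [OverlapSpaced, Finset.forall_mem_image, Finset.mem_range]
    intro i hi j hj hlt
    have hij := ((strictMonoOn_of_gaps hlam hgap).lt_iff_lt hi hj).1 hlt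
    obtain rfl | hij := Nat.eq_or_lt_of_le (Nat.succ_le_of_lt hij)
    · exact hgap i hj
    · exact .inr (by nlinarith [add_two_mul_le_of_gaps hlam hgap hij hj, hlam.1])

lemma card_overlaps_image (hlam : lam ∈ Set.Ioo 0 1)
    (hgap : ∀ i, i + 1 < n → b (i + 1) = b i + lam * (1 - lam) ∨ b i + lam ≤ b (i + 1)) :
    (overlaps lam lam ((Finset.range n).image b)).card =
      {i | i + 1 < n ∧ b (i + 1) = b i + lam * (1 - lam)}.ncard := by
  have hmono := strictMonoOn_of_gaps hlam hgap
  have hpos := mul_pos hlam.1 (sub_pos.2 hlam.2)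
  have h_image : ↑(overlaps lam lam ((Finset.range n).image b)) =
      b '' {i | i + 1 < n ∧ b (i + 1) = b i + lam * (1 - lam)} := by
    ext p
    simp only [Finset.mem_coe, mem_overlaps, Finset.mem_image, Finset.mem_range, Set.mem_image,
      Set.mem_ofPred_eq]
    constructor
    · rintro ⟨⟨i, hi, rfl⟩, j, hj, hij⟩
      have hlt := (hmono.lt_iff_lt hi hj).1 (by linarith)
      obtain rfl | hlt := Nat.eq_or_lt_of_le (Nat.succ_le_of_lt hlt)
      · exact ⟨i, ⟨hj, hij⟩, rfl⟩
      · linarith [add_two_mul_le_of_gaps hlam hgap hlt hj]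
    · rintro ⟨i, ⟨hi, hij⟩, rfl⟩
      exact ⟨⟨i, by omega, rfl⟩, i + 1, hi, hij⟩
  rw [← Set.ncard_coe_finset, h_image,
    (hmono.injOn.mono fun i hi => Nat.lt_of_succ_lt hi.1).ncard_image]

end DigitSequences

lemma volume_Icc_inter_Icc {a c l : ℝ} (h : a ≤ c) :
    volume (Set.Icc a (a + l) ∩ Set.Icc c (c + l)) = ENNReal.ofReal (a + l - c) := by
  rw [Set.Icc_inter_Icc, sup_eq_right.2 h, inf_eq_left.2 (by linarith), Real.volume_Icc]

lemma volume_Icc_inter_Icc_eq_iff {a c : ℝ} (hlam : 0 < lam) (h : a ≤ c) :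
    volume (Set.Icc a (a + lam) ∩ Set.Icc c (c + lam)) = ENNReal.ofReal (lam * lam) ↔
      c = a + lam * (1 - lam) := by
  rw [volume_Icc_inter_Icc h]
  constructor
  · intro hvol
    have hpos := ENNReal.ofReal_pos.1 (hvol ▸ ENNReal.ofReal_pos.2 (mul_pos hlam hlam))
    rw [ENNReal.ofReal_eq_ofReal_iff hpos.le (by positivity)] at hvol
    linarith
  · rintro rfl
    congr 1
    ring

lemma IsInClassA.exists_isOverlapAttractor {n m : ℕ} {E : Set ℝ} (hE : IsInClassA lam n m E) :
    ∃ B, IsOverlapAttractor lam B E ∧ B.card = n ∧ (overlaps lam lam B).card = m := by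
  obtain ⟨hlam, -, hnm, b, hb_zero, hb_last, hb_lt, hb_overlap, hb_count, hne, hcomp, hE_eq⟩ := hE
  have hgap (i : ℕ) (hi : i + 1 < n) :
      b (i + 1) = b i + lam * (1 - lam) ∨ b i + lam ≤ b (i + 1) := by
    have hlt := hb_lt i hi
    by_contra! h
    rcases hb_overlap i hi ⟨b (i + 1), ⟨hlt.le, h.2.le⟩, le_rfl, by linarith [hlam.1]⟩ with h₀ | h₁
    · rw [volume_Icc_inter_Icc hlt.le, ENNReal.ofReal_eq_zero] at h₀
      linarith
    · exact h.1 ((volume_Icc_inter_Icc_eq_iff hlam.1 hlt.le).1 h₁)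
  have hcount : {i | i + 1 < n ∧ b (i + 1) = b i + lam * (1 - lam)}.ncard = m := by
    rw [← hb_count]
    congr 1
    ext i
    exact and_congr_right fun hi => (volume_Icc_inter_Icc_eq_iff hlam.1 (hb_lt i hi).le).symm
  have hmono := strictMonoOn_of_gaps hlam hgap
  have hlam' := two_mul_le_one_of_gaps hlam (by omega) hb_zero hb_last hgap (by omega)
  refine ⟨(Finset.range n).image b,
    ⟨isOverlapDigitSet_image hlam hlam' (by omega) hb_zero hb_last hgap, hne, hcomp, ?_⟩, ?_,
    (card_overlaps_image hlam hgap).trans hcount⟩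
  · rw [Finset.set_biUnion_finset_image]
    exact hE_eq
  · rw [Finset.card_image_of_injOn, Finset.card_range]
    exact hmono.injOn.mono (by simp)

end OverlapDigitSets

section CylinderSystems

variable {ι X Y : Type*} {r : ι → ℝ}

/-- `F` is the attractor of the similitudes `g j` with ratios `r j`, and satisfies the strong
separation condition. -/
structure IsSeparatedAttractor [MetricSpace X] (g : ι → X → X) (r : ι → ℝ) (F : Set X) : Prop where
  nonempty : F.Nonempty
  isCompact : IsCompact F
  ratio_mem : ∀ j, r j ∈ Set.Ioo 0 1
  dist_map : ∀ j x y, dist (g j x) (g j y) = r j * dist x y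
  eq_iUnion : F = ⋃ j, g j '' F
  disjoint : Pairwise (Function.onFun Disjoint fun j => g j '' F)

/-- Nested partitions of (a part of) `E` into sets `A w`, indexed by the words `w` over `ι`, where
`A (j :: w)` are the parts of `A w`. Both the diameter of `A w` and its distance to the rest of `E`
are comparable to the product of the ratios `r` along `w`. -/
structure IsCylinderSystem [MetricSpace Y] (E : Set Y) (r : ι → ℝ) (A : List ι → Set Y) :
    Prop where
  ratio_mem : ∀ j, r j ∈ Set.Ioo 0 1
  nonempty : ∀ w, (A w).Nonempty
  subset : ∀ w, A w ⊆ E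
  eq_iUnion : ∀ w, A w = ⋃ j, A (j :: w)
  disjoint : ∀ w, Pairwise (Function.onFun Disjoint fun j => A (j :: w))
  exists_dist_le : ∃ D, ∀ w, ∀ a ∈ A w, ∀ a' ∈ A w, dist a a' ≤ D * (w.map r).prod
  exists_le_dist : ∃ c > 0, ∀ w, ∀ a ∈ A w, ∀ e ∈ E, e ∉ A w → c * (w.map r).prod ≤ dist a e

/-- The composition of the maps `g j` along a word; its first letter is applied first. -/
def wordMap (g : ι → X → X) : List ι → X → X
  | [] => id
  | j :: w => wordMap g w ∘ g j

namespace IsSeparatedAttractor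

variable [MetricSpace X] {g : ι → X → X} {F : Set X}

lemma prod_pos (hF : IsSeparatedAttractor g r F) (w : List ι) : 0 < (w.map r).prod :=
  prod_map_pos (fun j => (hF.ratio_mem j).1) w

lemma dist_wordMap (hF : IsSeparatedAttractor g r F) (w : List ι) (x y : X) :
    dist (wordMap g w x) (wordMap g w y) = (w.map r).prod * dist x y := by
  induction w generalizing x y with
  | nil => simp [wordMap]
  | cons j w ih =>
    rw [wordMap, Function.comp_apply, Function.comp_apply, ih, hF.dist_map, List.map_cons,
      List.prod_cons]
    ring

lemma wordMap_injective (hF : IsSeparatedAttractor g r F) (w : List ι) :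
    Function.Injective (wordMap g w) := fun x y hxy => by
  rw [← dist_eq_zero, hF.dist_wordMap, mul_eq_zero] at hxy
  exact dist_eq_zero.1 (hxy.resolve_left (hF.prod_pos w).ne')

lemma wordMap_image_eq_iUnion (hF : IsSeparatedAttractor g r F) (w : List ι) :
    wordMap g w '' F = ⋃ j, wordMap g (j :: w) '' F := by
  conv_lhs => rw [hF.eq_iUnion, Set.image_iUnion]
  simp only [wordMap, Set.image_comp]

lemma exists_forall_le_dist_of_ne [Finite ι] (hF : IsSeparatedAttractor g r F) :
    ∃ c > 0, ∀ j j', j ≠ j' → ∀ x ∈ F, ∀ y ∈ F, c ≤ dist (g j x) (g j' y) := by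
  have hg (j : ι) : Continuous (g j) :=
    (LipschitzWith.of_dist_le_mul (K := ⟨r j, (hF.ratio_mem j).1.le⟩)
      fun x y => (hF.dist_map j x y).le).continuous
  have h_compact : IsCompact (⋃ (j) (j') (_ : j ≠ j'), (g j '' F) ×ˢ (g j' '' F)) :=
    isCompact_iUnion fun j => isCompact_iUnion fun j' => isCompact_iUnion fun _ =>
      (hF.isCompact.image (hg j)).prod (hF.isCompact.image (hg j'))
  obtain ⟨c, hc, hle⟩ := h_compact.exists_forall_le' (f := fun z => dist z.1 z.2) (a := 0)
    continuous_dist.continuousOn fun z hz => by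
      simp only [Set.mem_iUnion] at hz
      obtain ⟨j, j', hne, hz₁, hz₂⟩ := hz
      exact dist_pos.2 fun h => Set.disjoint_left.1 (hF.disjoint hne) hz₁ (h ▸ hz₂)
  exact ⟨c, hc, fun j j' hne x hx y hy => hle (g j x, g j' y) <| Set.mem_iUnion.2 ⟨j,
    Set.mem_iUnion₂.2 ⟨j', hne, Set.mem_image_of_mem _ hx, Set.mem_image_of_mem _ hy⟩⟩⟩

lemma exists_forall_le_dist_wordMap [Finite ι] (hF : IsSeparatedAttractor g r F) :
    ∃ c > 0, ∀ w, ∀ x ∈ F, ∀ e ∈ F, e ∉ wordMap g w '' F →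
      c * (w.map r).prod ≤ dist (wordMap g w x) e := by
  obtain ⟨c, hc, hsep⟩ := hF.exists_forall_le_dist_of_ne
  refine ⟨c, hc, fun w => ?_⟩
  induction w with
  | nil => exact fun x _ e he he' => (he' ⟨e, he, rfl⟩).elim
  | cons j w ih =>
    intro x hx e he he'
    have hprod : c * ((j :: w).map r).prod ≤ c * (w.map r).prod := by
      rw [List.map_cons, List.prod_cons]
      exact mul_le_mul_of_nonneg_left
        (mul_le_of_le_one_left (hF.prod_pos w).le (hF.ratio_mem j).2.le) hc.le
    refine hprod.trans ?_
    by_cases hw : e ∈ wordMap g w '' F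
    · rw [hF.wordMap_image_eq_iUnion, Set.mem_iUnion] at hw
      obtain ⟨j', y, hy, rfl⟩ := hw
      have hne : j ≠ j' := fun h => he' (h ▸ Set.mem_image_of_mem _ hy)
      rw [wordMap, wordMap, Function.comp_apply, Function.comp_apply, hF.dist_wordMap, mul_comm]
      exact mul_le_mul_of_nonneg_left (hsep j j' hne x hx y hy) (hF.prod_pos w).le
    · refine ih (g j x) ?_ e he hw
      rw [hF.eq_iUnion]
      exact Set.mem_iUnion.2 ⟨j, Set.mem_image_of_mem _ hx⟩

lemma wordMap_image_subset (hF : IsSeparatedAttractor g r F) (w : List ι) :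
    wordMap g w '' F ⊆ F := by
  induction w with
  | nil => simp [wordMap]
  | cons j w ih =>
    refine subset_trans ?_ ih
    rw [hF.wordMap_image_eq_iUnion w]
    exact Set.subset_iUnion (fun j => wordMap g (j :: w) '' F) j

lemma isCylinderSystem [Finite ι] (hF : IsSeparatedAttractor g r F) :
    IsCylinderSystem F r fun w => wordMap g w '' F where
  ratio_mem := hF.ratio_mem
  nonempty w := hF.nonempty.image _
  subset := hF.wordMap_image_subset
  eq_iUnion := hF.wordMap_image_eq_iUnion
  disjoint w j j' hne := by
    simp only [Function.onFun, wordMap, Set.image_comp]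
    exact (Set.disjoint_image_iff (hF.wordMap_injective w)).2 (hF.disjoint hne)
  exists_dist_le := by
    refine ⟨Metric.diam F, fun w => ?_⟩
    rintro _ ⟨x, hx, rfl⟩ _ ⟨y, hy, rfl⟩
    rw [hF.dist_wordMap, mul_comm]
    exact mul_le_mul_of_nonneg_right (Metric.dist_le_diam_of_mem hF.isCompact.isBounded hx hy)
      (hF.prod_pos w).le
  exists_le_dist := by
    obtain ⟨c, hc, hsep⟩ := hF.exists_forall_le_dist_wordMap
    refine ⟨c, hc, fun w => ?_⟩
    rintro _ ⟨x, hx, rfl⟩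
    exact hsep w x hx

end IsSeparatedAttractor

namespace IsCylinderSystem

variable [MetricSpace X] [MetricSpace Y] {E : Set Y} {F : Set X} {A : List ι → Set X}

lemma of_lipEquiv (hA : IsCylinderSystem F r A) (hEF : LipEquiv E F) :
    ∃ A' : List ι → Set Y, IsCylinderSystem E r A' := by
  obtain ⟨f, hf, C, hC, hdist⟩ := hEF
  refine ⟨fun w => {e | ∃ h : e ∈ E, (f ⟨e, h⟩ : X) ∈ A w}, hA.ratio_mem, fun w => ?_,
    fun w e he => he.1, fun w => ?_, fun w j j' hne => ?_, ?_, ?_⟩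
  · obtain ⟨a, ha⟩ := hA.nonempty w
    obtain ⟨e, he⟩ := hf.surjective ⟨a, hA.subset w ha⟩
    exact ⟨e, e.2, by rwa [he]⟩
  · ext e
    simp only [Set.mem_iUnion, Set.mem_ofPred_eq, hA.eq_iUnion w]
    exact exists_comm
  · exact Set.disjoint_left.2 fun e ⟨_, he⟩ ⟨_, he'⟩ =>
      Set.disjoint_left.1 (hA.disjoint w hne) he he'
  · obtain ⟨D, hD⟩ := hA.exists_dist_le
    refine ⟨C * D, fun w e ⟨h, he⟩ e' ⟨h', he'⟩ => ?_⟩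
    have h_lip := (hdist ⟨e, h⟩ ⟨e', h'⟩).1.trans (hD w _ he _ he')
    rwa [inv_mul_le_iff₀ hC, ← mul_assoc] at h_lip
  · obtain ⟨c, hc, hsep⟩ := hA.exists_le_dist
    refine ⟨C⁻¹ * c, by positivity, fun w e ⟨h, he⟩ e' h' he' => ?_⟩
    have h_lip := (hsep w _ he _ (f ⟨e', h'⟩).2 fun hmem => he' ⟨h', hmem⟩).trans
      (hdist ⟨e, h⟩ ⟨e', h'⟩).2
    rwa [mul_assoc, inv_mul_le_iff₀ hC]

lemma exists_level (hA : IsCylinderSystem F r A) {lam : ℝ} (hlam : lam ∈ Set.Ioo 0 1) :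
    ∃ c > 0, ∃ k : List ι → ℕ, ∀ w, IsIsolatedAt F (lam ^ k w) (A w) ∧
      c * (w.map r).prod ≤ lam ^ k w ∧ lam ^ k w ≤ (w.map r).prod := by
  obtain ⟨c, hc, hsep⟩ := hA.exists_le_dist
  have hc' : 0 < min c 1 := lt_min hc one_pos
  have prod_pos (w : List ι) : 0 < (w.map r).prod :=
    prod_map_pos (fun j => (hA.ratio_mem j).1) w
  have prod_le_one (w : List ι) : (w.map r).prod ≤ 1 := by
    induction w with
    | nil => simp
    | cons j w ih =>
      rw [List.map_cons, List.prod_cons]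
      exact mul_le_one₀ (hA.ratio_mem j).2.le (prod_pos w).le ih
  have near (w : List ι) := exists_nat_pow_near_of_lt_one (mul_pos hc' (prod_pos w))
    (mul_le_one₀ (min_le_right c 1) (prod_pos w).le (prod_le_one w)) hlam.1 hlam.2
  choose k hk_lt hk_le using near
  refine ⟨lam * min c 1, mul_pos hlam.1 hc', fun w => k w + 1, fun w => ⟨?_, ?_, ?_⟩⟩
  · intro a ha e he hae
    by_contra h
    have := hsep w a ha e he h
    have := mul_le_mul_of_nonneg_right (min_le_left c 1) (prod_pos w).le
    linarith [hk_lt w]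
  · rw [pow_succ', mul_assoc]
    exact mul_le_mul_of_nonneg_left (hk_le w) hlam.1.le
  · exact (hk_lt w).le.trans (mul_le_of_le_one_left (prod_pos w).le (min_le_right c 1))

end IsCylinderSystem

end CylinderSystems

section GibbsMassOfCylinders

variable {lam β : ℝ} {B : Finset ℝ} {E : Set ℝ} {ι : Type*} {r : ι → ℝ} {A : List ι → Set ℝ}
  {k : List ι → ℕ}

/-- The possible values of `β ^ j * weight lam β B j A` for sets `A` which contain at most `N₀`
vertices. -/
def weightValues (β : ℝ) (N₀ : ℕ) : Set ℝ :=
  {τ | ∃ N M : ℕ, 1 ≤ N ∧ N ≤ N₀ ∧ M ≤ N ∧ τ = β * N - M}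

lemma finite_weightValues (β : ℝ) (N₀ : ℕ) : (weightValues β N₀).Finite := by
  refine (((Set.finite_Iic N₀).prod (Set.finite_Iic N₀)).image
    fun x : ℕ × ℕ => β * x.1 - x.2).subset ?_
  rintro _ ⟨N, M, -, hN, hM, rfl⟩
  exact ⟨(N, M), ⟨hN, hM.trans hN⟩, rfl⟩

lemma weightValues_subset_range_evalAt {n m : ℕ} (hβ : β * β = n * β - m) (N₀ : ℕ) :
    weightValues β N₀ ⊆ Set.range (QuadraticOrder.evalAt (n := n) (m := m) β hβ) := by
  rintro _ ⟨N, M, -, -, -, rfl⟩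
  refine ⟨⟨-M, N⟩, ?_⟩
  rw [QuadraticOrder.evalAt_apply]
  push_cast
  ring

lemma weightValues_subset_Icc (hβ : 1 < β) (N₀ : ℕ) :
    weightValues β N₀ ⊆ Set.Icc (β - 1) (β * N₀) := by
  rintro _ ⟨N, M, hN, hNN₀, hM, rfl⟩
  have hN' : (1 : ℝ) ≤ N := by exact_mod_cast hN
  have hM' : (M : ℝ) ≤ N := by exact_mod_cast hM
  have hNN₀' : (N : ℝ) ≤ N₀ := by exact_mod_cast hNN₀
  constructor
  · linarith [mul_le_mul_of_nonneg_left hN' (sub_pos.2 hβ).le]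
  · linarith [mul_le_mul_of_nonneg_left hNN₀' (one_pos.trans hβ).le, M.cast_nonneg (α := ℝ)]

lemma one_div_pow_eq_pow_rpow_logb (hlam : lam ∈ Set.Ioo 0 1) (hβ : 0 < β) (k : ℕ) :
    1 / β ^ k = (lam ^ k) ^ Real.logb lam β⁻¹ := by
  rw [← Real.rpow_natCast lam k, ← Real.rpow_mul hlam.1.le, mul_comm, Real.rpow_mul hlam.1.le,
    Real.rpow_logb hlam.1 hlam.2.ne (inv_pos.2 hβ), Real.rpow_natCast, inv_pow, one_div]

namespace IsOverlapAttractor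

lemma weight_cylinder_eq_sum [Fintype ι] (hE : IsOverlapAttractor lam B E)
    (hβ : IsQuadraticPisot B.card (overlaps lam lam B).card β) (hA : IsCylinderSystem E r A)
    (hk : ∀ w, IsIsolatedAt E (lam ^ k w) (A w)) (w : List ι) :
    weight lam β B (k w) (A w) = ∑ j, weight lam β B (k (j :: w)) (A (j :: w)) := by
  set K := k w + ∑ j, k (j :: w)
  have hK (j : ι) : k (j :: w) ≤ K := (Finset.single_le_sum (f := fun j => k (j :: w))
    (fun _ _ => Nat.zero_le _) (Finset.mem_univ j)).trans (Nat.le_add_left _ _)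
  rw [← hE.weight_eq_of_le hβ (hk w) (Nat.le_add_right _ _ : k w ≤ K), hA.eq_iUnion w,
    weight_iUnion (hA.disjoint w)]
  exact Finset.sum_congr rfl fun j _ => hE.weight_eq_of_le hβ (hk (j :: w)) (hK j)

lemma exists_weight_cylinder_eq_div (hE : IsOverlapAttractor lam B E) (hA : IsCylinderSystem E r A)
    (hk : ∀ w, IsIsolatedAt E (lam ^ k w) (A w)) {c : ℝ} (hc : 0 < c)
    (hle : ∀ w, c * (w.map r).prod ≤ lam ^ k w) (β : ℝ) :
    ∃ N₀ : ℕ, ∀ w, ∃ τ ∈ weightValues β N₀, weight lam β B (k w) (A w) = τ / β ^ k w := by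
  obtain ⟨D, hD⟩ := hA.exists_dist_le
  refine ⟨⌊2 * (|D| / c)⌋₊ + 1, fun w => ?_⟩
  have diam_le : |D| * (w.map r).prod ≤ |D| / c * lam ^ k w := by
    rw [div_mul_eq_mul_div, le_div_iff₀ hc, mul_assoc, mul_comm _ c]
    exact mul_le_mul_of_nonneg_left (hle w) (abs_nonneg D)
  have prod_nonneg : 0 ≤ (w.map r).prod := (prod_map_pos (fun j => (hA.ratio_mem j).1) w).le
  obtain ⟨N, M, hN, hNN₀, hM, h⟩ := hE.exists_weight_eq (β := β) (hA.subset w) (hA.nonempty w)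
    (hk w) fun a ha a' ha' => (hD w a ha a' ha').trans <|
      (mul_le_mul_of_nonneg_right (le_abs_self D) prod_nonneg).trans diam_le
  exact ⟨_, ⟨N, M, hN, hNN₀, hM, rfl⟩, h⟩

lemma exists_isGibbsMass_weight [Fintype ι] (hE : IsOverlapAttractor lam B E)
    (hβ : IsQuadraticPisot B.card (overlaps lam lam B).card β) (hA : IsCylinderSystem E r A) :
    ∃ (s : ℝ) (N₀ : ℕ) (k : List ι → ℕ), 0 < s ∧
      (∀ w, ∃ τ ∈ weightValues β N₀, weight lam β B (k w) (A w) = τ / β ^ k w) ∧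
      IsGibbsMass (fun j => r j ^ s) fun w => weight lam β B (k w) (A w) := by
  have hβ0 : 0 < β := one_pos.trans hβ.one_lt
  have hlam : lam ∈ Set.Ioo 0 1 := ⟨hE.lam_pos, hE.lam_lt_one⟩
  obtain ⟨c, hc, k, hk⟩ := hA.exists_level hlam
  obtain ⟨N₀, hN₀⟩ := hE.exists_weight_cylinder_eq_div hA (fun w => (hk w).1) hc
    (fun w => (hk w).2.1) β
  have hs : 0 < Real.logb lam β⁻¹ := Real.logb_pos_of_base_lt_one hE.lam_pos hE.lam_lt_one
    (inv_pos.2 hβ0) (inv_lt_one_of_one_lt₀ hβ.one_lt)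
  have prod_pos (w : List ι) : 0 < (w.map r).prod := prod_map_pos (fun j => (hA.ratio_mem j).1) w
  have weight_eq (w : List ι) : ∃ τ ∈ Set.Icc (β - 1) (β * N₀),
      weight lam β B (k w) (A w) = τ * (lam ^ k w) ^ Real.logb lam β⁻¹ := by
    obtain ⟨τ, hτ, h⟩ := hN₀ w
    exact ⟨τ, weightValues_subset_Icc hβ.one_lt N₀ hτ,
      by rw [h, ← one_div_pow_eq_pow_rpow_logb hlam hβ0, mul_one_div]⟩
  set s := Real.logb lam β⁻¹
  have prod_rpow (w : List ι) : (w.map fun j => r j ^ s).prod = (w.map r).prod ^ s :=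
    Real.list_prod_map_rpow' w r (fun j _ => (hA.ratio_mem j).1.le) s
  refine ⟨s, N₀, k, hs, hN₀, fun j => Real.rpow_pos_of_pos (hA.ratio_mem j).1 s,
    hE.weight_cylinder_eq_sum hβ hA fun w => (hk w).1,
    ⟨(β - 1) * c ^ s, mul_pos (sub_pos.2 hβ.one_lt) (Real.rpow_pos_of_pos hc s), fun w => ?_⟩,
    ⟨β * N₀, fun w => ?_⟩⟩
  · obtain ⟨τ, hτ, h⟩ := weight_eq w
    rw [h, prod_rpow, mul_assoc, ← Real.mul_rpow hc.le (prod_pos w).le]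
    have := prod_pos w
    exact mul_le_mul hτ.1 (Real.rpow_le_rpow (by positivity) (hk w).2.1 hs.le) (by positivity)
      ((sub_pos.2 hβ.one_lt).le.trans hτ.1)
  · obtain ⟨τ, hτ, h⟩ := weight_eq w
    have := hE.lam_pos
    rw [h, prod_rpow]
    exact mul_le_mul hτ.2 (Real.rpow_le_rpow (by positivity) (hk w).2.2 hs.le) (by positivity)
      (by positivity)

lemma not_isCylinderSystem [Finite ι] (hE : IsOverlapAttractor lam B E)
    (hβ : IsQuadraticPisot B.card (overlaps lam lam B).card β)
    (hm : ¬ ∃ a i : ℕ, 2 ≤ i ∧ (overlaps lam lam B).card = a ^ i) : ¬ IsCylinderSystem E r A := by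
  intro hA
  have := Fintype.ofFinite ι
  obtain ⟨s, N₀, k, hs, hvalue, hmass⟩ := hE.exists_isGibbsMass_weight hβ hA
  exact hβ.not_isGibbsMass hm
    (fun j => Real.rpow_lt_one (hA.ratio_mem j).1.le (hA.ratio_mem j).2 hs)
    (finite_weightValues β N₀)
    (fun τ hτ => (sub_pos.2 hβ.one_lt).trans_le (weightValues_subset_Icc hβ.one_lt N₀ hτ).1)
    (weightValues_subset_range_evalAt hβ.mul_self_eq N₀) (fun w => ⟨k w, hvalue w⟩) hmass

end IsOverlapAttractor

end GibbsMassOfCylinders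

theorem not_lipEquiv_dustLike_of_not_perfectPower_general {lam : ℝ} {n m : ℕ} {E : Set ℝ}
    (hE : IsInClassA lam n m E) (hm : ¬ ∃ a i : ℕ, 2 ≤ i ∧ m = a ^ i) {X ι : Type*} [MetricSpace X]
    [Finite ι] {g : ι → X → X} {r : ι → ℝ} {F : Set X} (hF : IsSeparatedAttractor g r F) :
    ¬ LipEquiv E F := by
  intro hEF
  obtain ⟨β, hβ⟩ := exists_isQuadraticPisot hE.2.1 hE.2.2.1
  obtain ⟨B, hB, rfl, rfl⟩ := hE.exists_isOverlapAttractor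
  obtain ⟨A, hA⟩ := hF.isCylinderSystem.of_lipEquiv hEF
  exact hB.not_isCylinderSystem hβ hm hA

/-- If `E ∈ 𝒜(λ, n, m)` and `m` is not a perfect power, then `E` is not
Lipschitz equivalent to any dust-like self-similar set. -/
theorem not_lipEquiv_dustLike_of_not_perfectPower
    (lam : ℝ) (n m : ℕ) (E : Set ℝ) (hE : IsInClassA lam n m E)
    (hm : ¬ ∃ a i : ℕ, 2 ≤ i ∧ m = a ^ i) :
    ∀ (d : ℕ) (F : Set (EuclideanSpace ℝ (Fin d))), IsDustLike F → ¬ LipEquiv E F := by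
  rintro d F ⟨hne, hF, t, -, g, r, hr, hg, hF_eq, hdisj⟩
  exact not_lipEquiv_dustLike_of_not_perfectPower_general hE hm
    ⟨hne, hF, hr, hg, hF_eq, fun j j' => hdisj j j'⟩
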